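/- Correctness of the NP-hardness reduction: Let φ = κ₁ ∨ … ∨ κₙ be a propositional formula in 3DNF over a finite set V of variables, where each κᵢ = λᵢ¹ ∧ λᵢ² ∧ λᵢ³ is a conjunction of three literals. Using concept names A_x and A_{¬x} for each x ∈ V, B_i for 1 ≤ i ≤ n, and C, let T_φ = {A_{λᵢ¹} ⊓ A_{λᵢ²} ⊓ A_{λᵢ³} ⊑ B_i : 1 ≤ i ≤ n} ∪ {B_i ⊑ C : 1 ≤ i ≤ n} and C_φ = {(A_x|⊤)[1/2,1], (A_{¬x}|⊤)[1/2,1], (A_{¬x}|A_x)[0,0] : x ∈ V} ∪ {(C|⊤)[0,1/2]}. Then φ is valid (true under every truth assignment to V) if and only if the knowledge base K_φ = (T_φ, C_φ) is inconsistent, i.e., no finite interpretation satisfies all GCIs in T_φ and all conditionals in C_φ. -/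

import Mathlib

open scoped Classical

/-- ALC concepts over concept names and role names (both drawn from ℕ,
regarded as disjoint name spaces). -/
inductive Cpt : Type where
  | top : Cpt
  | atom : ℕ → Cpt
  | neg : Cpt → Cpt
  | inter : Cpt → Cpt → Cpt
  | ex : ℕ → Cpt → Cpt
deriving DecidableEq

/-- A finite interpretation with domain drawn from the type `α`. -/
structure Interp (α : Type) where
  dom : Finset α
  dom_nonempty : dom.Nonempty
  conc : ℕ → Finset α
  conc_sub : ∀ a, conc a ⊆ dom
  role : ℕ → Finset (α × α)
  role_sub : ∀ r, role r ⊆ dom ×ˢ dom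

/-- The extension `C^I` of a concept. -/
noncomputable def Interp.ext {α : Type} (I : Interp α) : Cpt → Finset α
  | .top => I.dom
  | .atom a => I.conc a
  | .neg c => I.dom \ I.ext c
  | .inter c d => I.ext c ∩ I.ext d
  | .ex r c => I.dom.filter (fun d => ∃ e ∈ I.ext c, (d, e) ∈ I.role r)

/-- `[C]^I`, the cardinality of the extension of `C`. -/
noncomputable def cardC {α : Type} (I : Interp α) (c : Cpt) : ℕ := (I.ext c).card

/-- A probabilistic conditional `(C|D)[l,u]`. -/
structure Cond : Type where
  C : Cpt
  D : Cpt
  l : ℚ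
  u : ℚ
deriving DecidableEq

/-- `I ⊨ (C|D)[l,u]` iff `[D]^I = 0` or `l ≤ [C ⊓ D]^I/[D]^I ≤ u`. -/
def satCond {α : Type} (I : Interp α) (κ : Cond) : Prop :=
  cardC I κ.D = 0 ∨
    (κ.l ≤ (cardC I (.inter κ.C κ.D) : ℚ) / (cardC I κ.D : ℚ) ∧
     (cardC I (.inter κ.C κ.D) : ℚ) / (cardC I κ.D : ℚ) ≤ κ.u)

/-- Finite interpretations (with domain drawn from the countable set ℕ). -/
abbrev FInterp := Interp ℕ

/-- The models of a knowledge base (finite set of conditionals). -/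
def Models (K : Finset Cond) : Set FInterp := {I | ∀ κ ∈ K, satCond I κ}

/-- l-entailment: every model of `K` satisfies the conditional. -/
def entailsL (K : Finset Cond) (κ : Cond) : Prop := ∀ I ∈ Models K, satCond I κ

/-- Concept name `A_x` for the positive literal on variable `x`
(`Nat.pair` is used to keep the name spaces disjoint). -/
def Apos (x : ℕ) : Cpt := .atom (Nat.pair 0 (Nat.pair x 1))

/-- Concept name `A_{¬x}` for the negative literal on variable `x`. -/
def Aneg (x : ℕ) : Cpt := .atom (Nat.pair 0 (Nat.pair x 0))

/-- The concept name `A_λ` associated with a literal `λ` (variable, polarity). -/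
def Alit (lit : ℕ × Bool) : Cpt := if lit.2 then Apos lit.1 else Aneg lit.1

/-- Concept name `B_i` for the `i`-th clause. -/
def Bcl (i : ℕ) : Cpt := .atom (Nat.pair 1 i)

/-- The concept name `C`. -/
def Ccpt : Cpt := .atom (Nat.pair 2 0)

theorem satCond_top_iff (I : FInterp) (a : ℕ) (l u : ℚ) :
    satCond I ⟨.atom a, .top, l, u⟩ ↔
      l * (I.dom.card : ℚ) ≤ ((I.conc a).card : ℚ) ∧
        ((I.conc a).card : ℚ) ≤ u * (I.dom.card : ℚ) := by
  have hpos : 0 < I.dom.card := Finset.card_pos.mpr I.dom_nonempty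
  have hq : (0 : ℚ) < (I.dom.card : ℚ) := by exact_mod_cast hpos
  have h1 : I.ext (.inter (.atom a) .top) = I.conc a := by
    simp only [Interp.ext]
    ext d
    simp only [Finset.mem_inter]
    exact ⟨fun h => h.1, fun h => ⟨h, I.conc_sub a h⟩⟩
  simp only [satCond, cardC, h1]
  simp only [Interp.ext]
  rw [le_div_iff₀ hq, div_le_iff₀ hq]
  constructor
  · rintro (h | h)
    · omega
    · exact h
  · exact Or.inr

theorem satCond_disj_iff (I : FInterp) (a b : ℕ) :
    satCond I ⟨.atom a, .atom b, 0, 0⟩ ↔ Disjoint (I.conc a) (I.conc b) := by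
  simp only [satCond, cardC, Interp.ext]
  rw [Finset.disjoint_iff_inter_eq_empty]
  constructor
  · rintro (h | ⟨-, h⟩)
    · rw [Finset.card_eq_zero] at h
      simp [h]
    · by_cases hb : (I.conc b).card = 0
      · rw [Finset.card_eq_zero] at hb
        simp [hb]
      · have hq : (0 : ℚ) < ((I.conc b).card : ℚ) := by
          exact_mod_cast Nat.pos_of_ne_zero hb
        rw [div_le_iff₀ hq, zero_mul] at h
        have h' : (I.conc a ∩ I.conc b).card ≤ 0 := by
          have h2 := Nat.cast_le (α := ℚ).mp (h.trans_eq Nat.cast_zero.symm)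
          convert h2
        exact Finset.card_eq_zero.mp (Nat.le_zero.mp h')
  · intro h
    right
    have h' : ∀ x, x ∉ I.conc a ∩ I.conc b := by simp [h]
    have hc : ∀ (inst : DecidableEq ℕ), (@Inter.inter _ (@Finset.instInter _ inst) (I.conc a) (I.conc b)).card = 0 := by
      intro inst
      rw [Finset.card_eq_zero, Finset.eq_empty_iff_forall_notMem]
      simpa using h'
    rw [hc]
    simp

/-- Two-element model built from an assignment: `0` realises `v`, `1` its complement. -/
noncomputable def twoModel (v : ℕ → Bool) : FInterp where
  dom := {0, 1}
  dom_nonempty := ⟨0, by simp⟩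
  conc a :=
    if (Nat.unpair a).1 = 0 then
      if v (Nat.unpair (Nat.unpair a).2).1 = decide ((Nat.unpair (Nat.unpair a).2).2 = 1)
      then {0} else {1}
    else {1}
  conc_sub a := by
    split_ifs <;> simp
  role _ := ∅
  role_sub _ := by simp

theorem twoModel_card (v : ℕ → Bool) (a : ℕ) : ((twoModel v).conc a).card = 1 := by
  simp only [twoModel]
  split_ifs <;> simp

theorem twoModel_dom_card (v : ℕ → Bool) : (twoModel v).dom.card = 2 := by
  simp [twoModel]

theorem twoModel_Alit (v : ℕ → Bool) (p : ℕ × Bool) :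
    (twoModel v).ext (Alit p) = if v p.1 = p.2 then {0} else {1} := by
  obtain ⟨x, b⟩ := p
  cases b <;> simp [Alit, Apos, Aneg, Interp.ext, twoModel]

/-- Correctness of the NP-hardness reduction: a 3DNF formula
`φ = κ₁ ∨ … ∨ κₙ` with clauses `κᵢ = λᵢ¹ ∧ λᵢ² ∧ λᵢ³` over variables `V` is valid iff
the KB `K_φ = (T_φ, C_φ)` is inconsistent. -/
theorem np_hardness_reduction (n : ℕ) (lits : Fin n → Fin 3 → ℕ × Bool)
    (V : Finset ℕ) (hV : ∀ i j, (lits i j).1 ∈ V) :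
    (∀ v : ℕ → Bool, ∃ i : Fin n, ∀ j : Fin 3, v (lits i j).1 = (lits i j).2) ↔
      ¬ ∃ I : FInterp,
        (∀ i : Fin n,
          I.ext (.inter (.inter (Alit (lits i 0)) (Alit (lits i 1))) (Alit (lits i 2)))
              ⊆ I.ext (Bcl i) ∧
          I.ext (Bcl i) ⊆ I.ext Ccpt) ∧
        (∀ x ∈ V,
          satCond I ⟨Apos x, .top, 1/2, 1⟩ ∧
          satCond I ⟨Aneg x, .top, 1/2, 1⟩ ∧
          satCond I ⟨Aneg x, Apos x, 0, 0⟩) ∧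
        satCond I ⟨Ccpt, .top, 0, 1/2⟩ := by
  constructor
  · rintro hval ⟨I, hT, hC, hCc⟩
    have hpos : 0 < I.dom.card := Finset.card_pos.mpr I.dom_nonempty
    have hq : (0 : ℚ) < (I.dom.card : ℚ) := by exact_mod_cast hpos
    have hcov : ∀ x ∈ V, ∀ d ∈ I.dom, d ∉ I.ext (Apos x) → d ∈ I.ext (Aneg x) := by
      intro x hx d hd hnp
      obtain ⟨h1, h2, h3⟩ := hC x hx
      simp only [Apos, Aneg] at h1 h2 h3 hnp ⊢
      rw [satCond_top_iff] at h1 h2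
      rw [satCond_disj_iff] at h3
      simp only [Interp.ext] at hnp ⊢
      have hu : I.conc (Nat.pair 0 (Nat.pair x 0)) ∪ I.conc (Nat.pair 0 (Nat.pair x 1))
          = I.dom := by
        apply Finset.eq_of_subset_of_card_le
        · exact Finset.union_subset (I.conc_sub _) (I.conc_sub _)
        · rw [Finset.card_union_of_disjoint h3]
          have : (I.dom.card : ℚ) ≤ ((I.conc (Nat.pair 0 (Nat.pair x 0))).card : ℚ)
              + ((I.conc (Nat.pair 0 (Nat.pair x 1))).card : ℚ) := by
            linarith [h1.1, h2.1]
          exact_mod_cast this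
      rw [← hu, Finset.mem_union] at hd
      tauto
    have hall : I.dom ⊆ I.ext Ccpt := by
      intro d hd
      obtain ⟨i, hi⟩ := hval (fun x => decide (d ∈ I.ext (Apos x)))
      have hj : ∀ j, d ∈ I.ext (Alit (lits i j)) := by
        intro j
        have h := hi j
        have hv := hV i j
        unfold Alit
        cases hb : (lits i j).2
        · rw [hb] at h
          simpa using hcov _ hv d hd (by simpa using h)
        · rw [hb] at h
          simpa using h
      apply (hT i).2
      apply (hT i).1
      simp only [Interp.ext, Finset.mem_inter]
      exact ⟨⟨hj 0, hj 1⟩, hj 2⟩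
    simp only [Ccpt] at hCc hall
    rw [satCond_top_iff] at hCc
    simp only [Interp.ext] at hall
    have h1 : (I.dom.card : ℚ) ≤ ((I.conc (Nat.pair 2 0)).card : ℚ) := by
      exact_mod_cast Finset.card_le_card hall
    linarith [hCc.2]
  · intro hno
    by_contra hval
    push Not at hval
    obtain ⟨v, hv⟩ := hval
    apply hno
    have hB : ∀ i, (twoModel v).ext (Bcl i) = {1} := by
      intro i; simp [Bcl, Interp.ext, twoModel]
    have hCe : (twoModel v).ext Ccpt = {1} := by
      simp [Ccpt, Interp.ext, twoModel]
    refine ⟨twoModel v, ?_, ?_, ?_⟩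
    · intro i
      rw [hB, hCe]
      refine ⟨?_, subset_rfl⟩
      intro d hd
      simp only [Interp.ext, Finset.mem_inter, twoModel_Alit] at hd
      obtain ⟨j, hj⟩ := hv i
      have hd' : ∀ j, d ∈ (if v (lits i j).1 = (lits i j).2 then ({0} : Finset ℕ) else {1}) := by
        intro j
        fin_cases j
        · exact hd.1.1
        · exact hd.1.2
        · exact hd.2
      have := hd' j
      rwa [if_neg hj] at this
    · intro x _
      simp only [Apos, Aneg]
      rw [satCond_top_iff, satCond_top_iff, satCond_disj_iff, twoModel_card, twoModel_card,
        twoModel_dom_card]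
      refine ⟨by norm_num, by norm_num, ?_⟩
      cases h : v x <;> simp [twoModel, h]
    · simp only [Ccpt]
      rw [satCond_top_iff, twoModel_card, twoModel_dom_card]
      norm_num
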